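/- Let N ≥ 1 and Λ > 1. Let (u, v) be a classical solution of the system (P_Λ) with u ≥ 0 and v ≥ 0 on ℝ^N, satisfying condition (h∞). Then u and v depend only on the last coordinate x_N (i.e. u(x) = u(y) and v(x) = v(y) whenever x_N = y_N), and moreover ∂_N u > 0 and ∂_N v < 0 at every point of ℝ^N. -/

import Mathlib

open scoped RealInnerProductSpace
open Filter

noncomputable section

/-- The Laplacian of `f : ℝ^N → ℝ`, as the sum of the pure second partial
derivatives in the coordinate directions. -/
def lap (N : ℕ) (f : EuclideanSpace ℝ (Fin N) → ℝ) (x : EuclideanSpace ℝ (Fin N)) : ℝ :=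
  ∑ i : Fin N,
    fderiv ℝ (fun y => fderiv ℝ f y (EuclideanSpace.single i 1)) x (EuclideanSpace.single i 1)

/-- `(u, v)` is a classical solution of the system `(P_Λ)` on `ℝ^N`:
`u, v` are `C²` and `-Δu = u - u³ - Λ u v²`, `-Δv = v - v³ - Λ u² v` pointwise. -/
def IsSolution (N : ℕ) (Λ : ℝ) (u v : EuclideanSpace ℝ (Fin N) → ℝ) : Prop :=
  ContDiff ℝ 2 u ∧ ContDiff ℝ 2 v ∧
  (∀ x, -lap N u x = u x - (u x) ^ 3 - Λ * u x * (v x) ^ 2) ∧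
  (∀ x, -lap N v x = v x - (v x) ^ 3 - Λ * (u x) ^ 2 * v x)

/-- Condition `(h∞)`: `u → 1`, `v → 0` as `x_N → +∞` and `u → 0`, `v → 1` as
`x_N → -∞`, uniformly with respect to `x' ∈ ℝ^{N-1}` (the dimension is `N + 1`). -/
def Hinf (N : ℕ) (u v : EuclideanSpace ℝ (Fin (N + 1)) → ℝ) : Prop :=
  (∀ ε : ℝ, 0 < ε → ∃ M : ℝ, ∀ x : EuclideanSpace ℝ (Fin (N + 1)),
    M ≤ x (Fin.last N) → |u x - 1| < ε ∧ |v x| < ε) ∧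
  (∀ ε : ℝ, 0 < ε → ∃ M : ℝ, ∀ x : EuclideanSpace ℝ (Fin (N + 1)),
    x (Fin.last N) ≤ M → |u x| < ε ∧ |v x - 1| < ε)

/-!
The solution is slid over itself. Let `ℓ` be the last coordinate and order states `(u, v)` by
increasing `u` and decreasing `v`. Near the pure states `(1, 0)` and `(0, 1)` the system is coercive
along this order because `Λ > 1`, so the maximum principle for
`min (u (x + ξ) - u x) (v x - v (x + ξ))` shows that translation by `ξ` moves the solution up as
soon as, wherever it does not, the solution is near `(0, 1)` or its translate is near `(1, 0)`. For
large `ℓ ξ` this holds at every point. The set of admissible `ξ` is closed, and it is open in the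
half space `ℓ ξ > 0`: a chain of translates joins the two pure states, so some increment is large
near each point, and a weak Harnack inequality then bounds all increments from below on each slab
`|ℓ x| ≤ M`, while outside a slab the translate or the solution is near a pure state. Hence every
`ξ` with `ℓ ξ > 0` is admissible, and by closedness every `ξ` with `ℓ ξ = 0`; together with `-ξ`
this is the one-dimensional symmetry. The Harnack inequality for the increments along `t ξ`,
`t → 0`, makes the derivatives strictly signed. The uniformity in `x` rests on two a priori bounds:
`u, v ≤ 1`, from a Keller–Osserman barrier, and a global Lipschitz bound, from a barrier for the
difference of a function and its reflection.
-/

open Set Metric Module Topology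
open scoped Laplacian InnerProductSpace

section Calculus

variable {E : Type*} [NormedAddCommGroup E] [InnerProductSpace ℝ E]

theorem hasDerivAt_nonneg_of_eventually_le {g : ℝ → ℝ} {g' t : ℝ} (hg : HasDerivAt g g' t)
    (hle : ∀ᶠ s in 𝓝[>] 0, g t ≤ g (t + s)) : 0 ≤ g' := by
  refine ge_of_tendsto hg.tendsto_slope_zero_right ?_
  filter_upwards [hle, self_mem_nhdsWithin] with s hs hs₀
  exact smul_nonneg (inv_nonneg.2 (le_of_lt hs₀)) (sub_nonneg.2 hs)

theorem deriv_deriv_nonneg_of_isLocalMin {g : ℝ → ℝ} {t : ℝ} (hg : ContinuousAt g t)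
    (hmin : IsLocalMin g t) : 0 ≤ deriv (deriv g) t := by
  by_contra! hneg
  have hmax : IsLocalMax g t := isLocalMax_of_deriv_deriv_neg hneg hmin.deriv_eq_zero hg
  have hconst : g =ᶠ[𝓝 t] fun _ ↦ g t := by
    filter_upwards [hmin, hmax] with s h₁ h₂ using le_antisymm h₂ h₁
  have hzero : deriv g =ᶠ[𝓝 t] fun _ ↦ 0 := by simpa using hconst.deriv
  simp [hzero.deriv_eq] at hneg

theorem fderiv_fderiv_nonneg_of_isLocalMin {f : E → ℝ} {x : E} (hf : ContDiffAt ℝ 2 f x)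
    (hmin : IsLocalMin f x) (v : E) : 0 ≤ fderiv ℝ (fderiv ℝ f) x v v := by
  have hline (t : ℝ) : HasDerivAt (fun s : ℝ ↦ x + s • v) v t := by
    simpa using ((hasDerivAt_id t).smul_const v).const_add x
  have hline_tendsto : Tendsto (fun s : ℝ ↦ x + s • v) (𝓝 0) (𝓝 x) := by
    simpa using (hline 0).continuousAt.tendsto
  have hderiv : deriv (fun s : ℝ ↦ f (x + s • v)) =ᶠ[𝓝 0] fun s ↦ fderiv ℝ f (x + s • v) v := by
    filter_upwards [hline_tendsto.eventually (hf.eventually (by simp))] with s hs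
    exact ((hs.differentiableAt two_ne_zero).hasFDerivAt.comp_hasDerivAt s (hline s)).deriv
  have hdiff : DifferentiableAt ℝ (fderiv ℝ f) x :=
    (hf.fderiv_right (m := 1) (by norm_num)).differentiableAt one_ne_zero
  have hderiv₂ : HasDerivAt (fun s : ℝ ↦ fderiv ℝ f (x + s • v) v)
      (fderiv ℝ (fderiv ℝ f) x v v) 0 := by
    have hx : x + (0 : ℝ) • v = x := by simp
    have hcomp := (hx ▸ hdiff.hasFDerivAt).comp_hasDerivAt (0 : ℝ) (hline 0)
    simpa [hx] using hcomp.clm_apply (hasDerivAt_const (0 : ℝ) v)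
  rw [← hderiv₂.deriv, ← hderiv.deriv_eq]
  refine deriv_deriv_nonneg_of_isLocalMin ?_ ?_
  · exact ContinuousAt.comp (by simpa using hf.continuousAt) (hline 0).continuousAt
  · have := hline_tendsto.eventually hmin
    simpa [IsLocalMin, IsMinFilter] using this

theorem fderiv_norm_sub_sq (y : E) :
    fderiv ℝ (fun z ↦ ‖z - y‖ ^ 2) = fun z ↦ (2 : ℝ) • innerSL ℝ (z - y) := by
  ext1 z
  rw [fderiv_comp_sub (f := fun z : E ↦ ‖z‖ ^ 2) y, fderiv_norm_sq_apply,
    ← Nat.cast_smul_eq_nsmul ℝ 2, Nat.cast_ofNat]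

variable [FiniteDimensional ℝ E]

theorem laplacian_eq_sum_fderiv {ι : Type*} [Fintype ι] (b : OrthonormalBasis ι ℝ E) (f : E → ℝ)
    (x : E) : Δ f x = ∑ i, fderiv ℝ (fderiv ℝ f) x (b i) (b i) := by
  simp [InnerProductSpace.laplacian_eq_iteratedFDeriv_orthonormalBasis f b,
    iteratedFDeriv_two_apply]

theorem lap_eq_laplacian {N : ℕ} {f : EuclideanSpace ℝ (Fin N) → ℝ} (hf : ContDiff ℝ 2 f)
    (x : EuclideanSpace ℝ (Fin N)) : lap N f x = Δ f x := by
  have hdiff : DifferentiableAt ℝ (fderiv ℝ f) x :=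
    (hf.fderiv_right (m := 1) (by norm_num)).differentiable one_ne_zero x
  rw [laplacian_eq_sum_fderiv (EuclideanSpace.basisFun (Fin N) ℝ)]
  exact Finset.sum_congr rfl fun i _ ↦ by
    rw [fderiv_clm_apply hdiff (differentiableAt_const _)]
    simp

theorem laplacian_nonneg_of_isLocalMin {f : E → ℝ} {x : E} (hf : ContDiffAt ℝ 2 f x)
    (hmin : IsLocalMin f x) : 0 ≤ Δ f x := by
  rw [laplacian_eq_sum_fderiv (stdOrthonormalBasis ℝ E)]
  exact Finset.sum_nonneg fun i _ ↦ fderiv_fderiv_nonneg_of_isLocalMin hf hmin _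

theorem laplacian_le_of_isLocalMin_sub {f g : E → ℝ} {x : E} (hf : ContDiffAt ℝ 2 f x)
    (hg : ContDiffAt ℝ 2 g x) (hmin : IsLocalMin (f - g) x) : Δ g x ≤ Δ f x := by
  have hnonneg : 0 ≤ Δ (f - g) x := laplacian_nonneg_of_isLocalMin (hf.sub hg) hmin
  rwa [hf.laplacian_sub hg, sub_nonneg] at hnonneg

theorem laplacian_comp {F : ℝ → ℝ} {g : E → ℝ} {x : E} (hF : ContDiffAt ℝ 2 F (g x))
    (hg : ContDiffAt ℝ 2 g x) :
    Δ (F ∘ g) x = deriv (deriv F) (g x) * ‖fderiv ℝ g x‖ ^ 2 + deriv F (g x) * Δ g x := by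
  have hfderiv : fderiv ℝ (F ∘ g) =ᶠ[𝓝 x] fun y ↦ deriv F (g y) • fderiv ℝ g y := by
    filter_upwards [hg.continuousAt.eventually (hF.eventually (by simp)),
      hg.eventually (by simp)] with y hFy hgy
    exact ((hFy.differentiableAt two_ne_zero).hasDerivAt.comp_hasFDerivAt y
      (hgy.differentiableAt two_ne_zero).hasFDerivAt).fderiv
  have hF' : HasDerivAt (deriv F) (deriv (deriv F) (g x)) (g x) :=
    ((hF.derivWithin (m := 1) (by norm_num)).differentiableAt one_ne_zero).hasDerivAt
  have hg' : HasFDerivAt (fderiv ℝ g) (fderiv ℝ (fderiv ℝ g) x) x :=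
    ((hg.fderiv_right (m := 1) (by norm_num)).differentiableAt one_ne_zero).hasFDerivAt
  have hprod : HasFDerivAt (fun y ↦ deriv F (g y) • fderiv ℝ g y) _ x :=
    (hF'.comp_hasFDerivAt x (hg.differentiableAt two_ne_zero).hasFDerivAt).smul hg'
  simp only [laplacian_eq_sum_fderiv (stdOrthonormalBasis ℝ E), hfderiv.fderiv_eq, hprod.fderiv,
    OrthonormalBasis.norm_dual (stdOrthonormalBasis ℝ E), Finset.mul_sum,
    ← Finset.sum_add_distrib]
  refine Finset.sum_congr rfl fun i _ ↦ ?_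
  simp only [Function.comp_apply, add_apply, smul_apply,
    ContinuousLinearMap.smulRight_apply, smul_eq_mul]
  ring

theorem laplacian_comp_add_right (f : E → ℝ) (a x : E) :
    Δ (fun z ↦ f (z + a)) x = Δ f (x + a) := by
  simp [InnerProductSpace.laplacian_eq_iteratedFDeriv_stdOrthonormalBasis,
    iteratedFDeriv_comp_add_right]

theorem laplacian_comp_linearIsometryEquiv {f : E → ℝ} (hf : ContDiff ℝ 2 f) (R : E ≃ₗᵢ[ℝ] E)
    (x : E) : Δ (f ∘ R) x = Δ f (R x) := by
  rw [InnerProductSpace.laplacian_eq_iteratedFDeriv_stdOrthonormalBasis,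
    InnerProductSpace.laplacian_eq_iteratedFDeriv_orthonormalBasis f
      ((stdOrthonormalBasis ℝ E).map R)]
  refine Finset.sum_congr rfl fun i _ ↦ ?_
  have h := (R : E →L[ℝ] E).iteratedFDeriv_comp_right hf x le_rfl
  rw [ContinuousLinearEquiv.coe_coe, LinearIsometryEquiv.coe_coe] at h
  rw [h]
  simp [iteratedFDeriv_two_apply]

theorem laplacian_norm_sub_sq (y x : E) : Δ (fun z ↦ ‖z - y‖ ^ 2) x = 2 * finrank ℝ E := by
  have hfderiv₂ : HasFDerivAt (fun z ↦ (2 : ℝ) • innerSL ℝ (z - y))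
      ((2 : ℝ) • (innerSL ℝ : E →L[ℝ] E →L[ℝ] ℝ)) x :=
    ((innerSL ℝ : E →L[ℝ] E →L[ℝ] ℝ).hasFDerivAt.comp x
      ((hasFDerivAt_id x).sub_const y)).const_smul (2 : ℝ)
  have hbasis (i) : ((2 : ℝ) • (innerSL ℝ : E →L[ℝ] E →L[ℝ] ℝ)) (stdOrthonormalBasis ℝ E i)
      (stdOrthonormalBasis ℝ E i) = 2 := by
    change 2 * ⟪stdOrthonormalBasis ℝ E i, stdOrthonormalBasis ℝ E i⟫ = 2
    simp
  rw [laplacian_eq_sum_fderiv (stdOrthonormalBasis ℝ E), fderiv_norm_sub_sq, hfderiv₂.fderiv]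
  exact (Finset.sum_congr rfl fun i _ ↦ hbasis i).trans (by simp [mul_comm])

theorem laplacian_comp_norm_sub_sq {F : ℝ → ℝ} {x y : E} (hF : ContDiffAt ℝ 2 F (‖x - y‖ ^ 2)) :
    Δ (fun z ↦ F (‖z - y‖ ^ 2)) x =
      4 * ‖x - y‖ ^ 2 * deriv (deriv F) (‖x - y‖ ^ 2) +
        2 * finrank ℝ E * deriv F (‖x - y‖ ^ 2) := by
  have hcomp := laplacian_comp (g := fun z ↦ ‖z - y‖ ^ 2) hF
    ((contDiffAt_id.sub contDiffAt_const).norm_sq ℝ)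
  rw [fderiv_norm_sub_sq, laplacian_norm_sub_sq, norm_smul, innerSL_apply_norm,
    Real.norm_ofNat] at hcomp
  exact hcomp.trans (by ring)

theorem laplacian_comp_inner {F : ℝ → ℝ} {e x : E} (hF : ContDiffAt ℝ 2 F ⟪e, x⟫) :
    Δ (fun z ↦ F ⟪e, z⟫) x = ‖e‖ ^ 2 * deriv (deriv F) ⟪e, x⟫ := by
  have hfderiv : fderiv ℝ (innerSL ℝ e) = fun _ ↦ innerSL ℝ e :=
    funext fun _ ↦ (innerSL ℝ e).fderiv
  have hzero : Δ (⇑(innerSL ℝ e)) x = 0 := by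
    rw [laplacian_eq_sum_fderiv (stdOrthonormalBasis ℝ E), hfderiv]
    simp
  have hcomp := laplacian_comp (g := innerSL ℝ e) hF (innerSL ℝ e).contDiff.contDiffAt
  rw [hzero, hfderiv, innerSL_apply_norm] at hcomp
  exact hcomp.trans (by simp [mul_comm])

theorem le_of_laplacian_lt {f g : E → ℝ} {K : Set E} (hK : IsCompact K) (hf : ContinuousOn f K)
    (hg : ContinuousOn g K)
    (hlap : ∀ x ∈ K, g x < f x →
      K ∈ 𝓝 x ∧ ContDiffAt ℝ 2 f x ∧ ContDiffAt ℝ 2 g x ∧ Δ g x < Δ f x) {x : E} (hx : x ∈ K) :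
    f x ≤ g x := by
  obtain ⟨p, hpK, hmin⟩ := hK.exists_isMinOn ⟨x, hx⟩ (hg.sub hf)
  have hle : (g - f) p ≤ (g - f) x := hmin hx
  simp only [Pi.sub_apply] at hle
  by_contra! hlt
  obtain ⟨hnhds, hfp, hgp, hlt⟩ := hlap p hpK (by linarith)
  exact (laplacian_le_of_isLocalMin_sub hgp hfp (hmin.isLocalMin hnhds)).not_gt hlt

theorem neg_le_laplacian_of_penalized_min {f : E → ℝ} {p : E} {ε : ℝ} (hf : ContDiffAt ℝ 2 f p)
    (hmin : ∀ x, f p + ε * ‖p‖ ^ 2 ≤ f x + ε * ‖x‖ ^ 2) : -(2 * finrank ℝ E * ε) ≤ Δ f p := by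
  have hpen : ContDiffAt ℝ 2 (fun x : E ↦ -ε * ‖x‖ ^ 2) p :=
    contDiffAt_const.mul (contDiffAt_id.norm_sq ℝ)
  have hlap : Δ (fun x : E ↦ -ε * ‖x‖ ^ 2) p = -(2 * finrank ℝ E * ε) := by
    have h := laplacian_comp_norm_sub_sq (F := fun s ↦ -ε * s) (x := p) (y := 0) (by fun_prop)
    have hderiv : deriv (fun s ↦ -ε * s) = fun _ ↦ -ε := by ext s; simp
    simp only [sub_zero, hderiv, deriv_const] at h
    linarith
  rw [← hlap]
  refine laplacian_le_of_isLocalMin_sub hf hpen (Eventually.of_forall fun x ↦ ?_)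
  simp only [Pi.sub_apply]
  linarith [hmin x]

end Calculus

section APrioriBounds

variable {E : Type*} [NormedAddCommGroup E] [InnerProductSpace ℝ E] [FiniteDimensional ℝ E]

/-- The function `c / (r² - ‖x - y‖²)`, which blows up on the sphere of centre `y` and radius `r`,
with `c² = r⁴ + (8 + 2 n) r²`, `n = dim E`: the smallest `c` for which
`8 ‖x - y‖² + 2 n (r² - ‖x - y‖²) + (r² - ‖x - y‖²)² ≤ c²` is guaranteed on the ball, which makes it
a supersolution of `Δ w = w³ - w` there. -/
def kellerOssermanBarrier (r : ℝ) (y x : E) : ℝ :=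
  √(r ^ 4 + (8 + 2 * finrank ℝ E) * r ^ 2) * (r ^ 2 - ‖x - y‖ ^ 2)⁻¹

omit [FiniteDimensional ℝ E] in
theorem contDiffAt_kellerOssermanBarrier {x y : E} {r : ℝ} (hx : r ^ 2 - ‖x - y‖ ^ 2 ≠ 0) :
    ContDiffAt ℝ 2 (kellerOssermanBarrier r y) x :=
  contDiffAt_const.mul <|
    (contDiffAt_const.sub ((contDiffAt_id.sub contDiffAt_const).norm_sq ℝ)).inv hx

theorem laplacian_const_mul_inv_sub_norm_sq {x y : E} {r : ℝ} (hx : r ^ 2 - ‖x - y‖ ^ 2 ≠ 0)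
    (c : ℝ) :
    Δ (fun z ↦ c * (r ^ 2 - ‖z - y‖ ^ 2)⁻¹) x =
      c * (8 * ‖x - y‖ ^ 2 + 2 * finrank ℝ E * (r ^ 2 - ‖x - y‖ ^ 2)) /
        (r ^ 2 - ‖x - y‖ ^ 2) ^ 3 := by
  have hderiv : deriv (fun s ↦ c * (r ^ 2 - s)⁻¹) = fun s ↦ c * ((r ^ 2 - s) ^ 2)⁻¹ := by
    ext s
    rw [deriv_const_mul_field, deriv_comp_const_sub (fun s ↦ s⁻¹), deriv_inv, neg_neg]
  have hderiv₂ : HasDerivAt (fun s ↦ c * ((r ^ 2 - s) ^ 2)⁻¹)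
      (2 * c / (r ^ 2 - ‖x - y‖ ^ 2) ^ 3) (‖x - y‖ ^ 2) := by
    refine ((((hasDerivAt_id _).const_sub _).pow 2).inv (pow_ne_zero 2 hx)).const_mul c
      |>.congr_deriv ?_
    simp
    field_simp
  rw [laplacian_comp_norm_sub_sq (F := fun s ↦ c * (r ^ 2 - s)⁻¹)
    (contDiffAt_const.mul ((contDiffAt_const.sub contDiffAt_id).inv hx)), hderiv, hderiv₂.deriv]
  field_simp
  ring

theorem laplacian_kellerOssermanBarrier_le {x y : E} {r : ℝ} (hx : 0 < r ^ 2 - ‖x - y‖ ^ 2) :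
    Δ (kellerOssermanBarrier r y) x ≤
      kellerOssermanBarrier r y x ^ 3 - kellerOssermanBarrier r y x := by
  have hc : √(r ^ 4 + (8 + 2 * finrank ℝ E) * r ^ 2) ^ 2 =
    r ^ 4 + (8 + 2 * finrank ℝ E) * r ^ 2 := Real.sq_sqrt (by positivity)
  refine (laplacian_const_mul_inv_sub_norm_sq hx.ne' _).trans_le ?_
  unfold kellerOssermanBarrier
  set c := √(r ^ 4 + (8 + 2 * finrank ℝ E) * r ^ 2)
  set d := r ^ 2 - ‖x - y‖ ^ 2
  have hkey : 8 * ‖x - y‖ ^ 2 + 2 * finrank ℝ E * d ≤ c ^ 2 - d ^ 2 := by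
    rw [hc, ← sub_nonneg, show r ^ 4 + (8 + 2 * finrank ℝ E) * r ^ 2 - d ^ 2 -
      (8 * ‖x - y‖ ^ 2 + 2 * finrank ℝ E * d) =
        8 * d + 2 * finrank ℝ E * ‖x - y‖ ^ 2 + ‖x - y‖ ^ 2 * (d + r ^ 2) by simp only [d]; ring]
    positivity
  calc c * (8 * ‖x - y‖ ^ 2 + 2 * finrank ℝ E * d) / d ^ 3
      ≤ c * (c ^ 2 - d ^ 2) / d ^ 3 := by gcongr
    _ = (c * d⁻¹) ^ 3 - c * d⁻¹ := by field_simp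

omit [FiniteDimensional ℝ E] in
theorem one_le_kellerOssermanBarrier {x y : E} {r : ℝ} (hx : 0 < r ^ 2 - ‖x - y‖ ^ 2) :
    1 ≤ kellerOssermanBarrier r y x := by
  rw [kellerOssermanBarrier, ← div_eq_mul_inv, one_le_div hx]
  calc r ^ 2 - ‖x - y‖ ^ 2 ≤ r ^ 2 := sub_le_self _ (by positivity)
    _ = √(r ^ 4) := by rw [show r ^ 4 = (r ^ 2) ^ 2 by ring, Real.sqrt_sq (sq_nonneg r)]
    _ ≤ _ := Real.sqrt_le_sqrt (le_add_of_nonneg_right (by positivity))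

theorem isCompact_setOf_norm_sub_sq_le (y : E) (a : ℝ) : IsCompact {z : E | ‖z - y‖ ^ 2 ≤ a} := by
  refine (isCompact_closedBall y √a).of_isClosed_subset
    (isClosed_le (by fun_prop) continuous_const) fun z hz ↦ ?_
  rw [mem_closedBall, dist_eq_norm]
  exact Real.le_sqrt_of_sq_le hz

theorem le_kellerOssermanBarrier {u : E → ℝ} (hu : ContDiff ℝ 2 u)
    (hlap : ∀ x, u x ^ 3 - u x ≤ Δ u x) {x y : E} {r : ℝ} (hx : 0 < r ^ 2 - ‖x - y‖ ^ 2) :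
    u x ≤ kellerOssermanBarrier r y x := by
  obtain ⟨A, hA⟩ :=
    (isCompact_setOf_norm_sub_sq_le y (r ^ 2)).bddAbove_image hu.continuous.continuousOn
  have hA' {z : E} (hz : 0 < r ^ 2 - ‖z - y‖ ^ 2) : u z ≤ max A 1 :=
    le_max_of_le_left (hA (mem_image_of_mem u (sub_pos.1 hz).le))
  set ε := min (√(r ^ 4 + (8 + 2 * finrank ℝ E) * r ^ 2) / max A 1) (r ^ 2 - ‖x - y‖ ^ 2)
  have hε : 0 < ε := by
    have : 0 < r ^ 2 := by linarith [sq_nonneg ‖x - y‖]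
    exact lt_min (by positivity) hx
  refine le_of_laplacian_lt (isCompact_setOf_norm_sub_sq_le y (r ^ 2 - ε))
    hu.continuous.continuousOn (fun z hz ↦ (contDiffAt_kellerOssermanBarrier
      (hε.trans_le (le_sub_comm.1 hz)).ne').continuousAt.continuousWithinAt) (fun z hz hlt ↦ ?_)
    (show ‖x - y‖ ^ 2 ≤ r ^ 2 - ε from le_sub_comm.1 (min_le_right _ _))
  have hz : 0 < r ^ 2 - ‖z - y‖ ^ 2 := hε.trans_le (le_sub_comm.1 hz)
  refine ⟨?_, hu.contDiffAt, contDiffAt_kellerOssermanBarrier hz.ne', ?_⟩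
  · have hzε : ε < r ^ 2 - ‖z - y‖ ^ 2 := by
      refine (min_le_left _ _).trans_lt ?_
      rw [div_lt_comm₀ (by positivity) hz, div_eq_mul_inv]
      exact hlt.trans_le (hA' hz)
    have hcont : Continuous fun z ↦ ‖z - y‖ ^ 2 := by fun_prop
    filter_upwards [hcont.continuousAt.eventually_lt_const (lt_sub_comm.1 hzε)] with w hw
    exact hw.le
  · have hone := one_le_kellerOssermanBarrier hz
    set B := kellerOssermanBarrier r y z
    have hfactor : 0 < u z ^ 2 + u z * B + B ^ 2 - 1 := by nlinarith
    calc Δ (kellerOssermanBarrier r y) z ≤ B ^ 3 - B := laplacian_kellerOssermanBarrier_le hz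
      _ < u z ^ 3 - u z := by nlinarith [mul_pos (sub_pos.2 hlt) hfactor]
      _ ≤ Δ u z := hlap z

theorem le_one_of_cube_sub_le_laplacian {u : E → ℝ} (hu : ContDiff ℝ 2 u)
    (hlap : ∀ x, u x ^ 3 - u x ≤ Δ u x) (x : E) : u x ≤ 1 := by
  have hlim : Tendsto (fun r : ℝ ↦ √(1 + (8 + 2 * finrank ℝ E) / r ^ 2)) atTop (𝓝 √(1 + 0)) :=
    ((tendsto_const_nhds.div_atTop (tendsto_pow_atTop two_ne_zero)).const_add 1).sqrt
  rw [add_zero, Real.sqrt_one] at hlim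
  refine ge_of_tendsto hlim ?_
  filter_upwards [eventually_gt_atTop 0] with r hr
  calc u x ≤ kellerOssermanBarrier r x x := le_kellerOssermanBarrier hu hlap (by simp [hr])
    _ = √(1 + (8 + 2 * finrank ℝ E) / r ^ 2) := by
      rw [kellerOssermanBarrier, show r ^ 4 + (8 + 2 * finrank ℝ E) * r ^ 2 =
        (1 + (8 + 2 * finrank ℝ E) / r ^ 2) * (r ^ 2) ^ 2 by field_simp,
        Real.sqrt_mul' _ (by positivity), Real.sqrt_sq (by positivity)]
      simp [hr.ne']

/-- The barrier `A ‖x‖² + c (t - t²)`, `t = ⟪e, x⟫`, on the half ball `‖x‖ ≤ 1`, `0 ≤ t`: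
nonnegative on the flat part of the boundary, at least `A` on the spherical part, and as
superharmonic as one wishes for large `c`. -/
def halfBallBarrier (A c : ℝ) (e x : E) : ℝ :=
  A * ‖x‖ ^ 2 + c * (⟪e, x⟫ - ⟪e, x⟫ ^ 2)

omit [FiniteDimensional ℝ E] in
theorem contDiff_halfBallBarrier (A c : ℝ) (e : E) : ContDiff ℝ 2 (halfBallBarrier A c e) :=
  (contDiff_const.mul (contDiff_id.norm_sq ℝ)).add <|
    contDiff_const.mul ((contDiff_const.inner ℝ contDiff_id).sub
      ((contDiff_const.inner ℝ contDiff_id).pow 2))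

theorem laplacian_halfBallBarrier (A c : ℝ) {e : E} (he : ‖e‖ = 1) (x : E) :
    Δ (halfBallBarrier A c e) x = 2 * finrank ℝ E * A - 2 * c := by
  have hsq : Δ (fun z : E ↦ A * ‖z‖ ^ 2) x = 2 * finrank ℝ E * A := by
    have h := laplacian_comp_norm_sub_sq (F := fun s ↦ A * s) (x := x) (y := 0) (by fun_prop)
    have hderiv : deriv (fun s ↦ A * s) = fun _ ↦ A := by ext s; simp
    simpa [hderiv, mul_assoc] using h
  have hridge : Δ (fun z ↦ c * (⟪e, z⟫ - ⟪e, z⟫ ^ 2)) x = -(2 * c) := by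
    have hderiv : deriv (fun s : ℝ ↦ c * (s - s ^ 2)) = fun s ↦ c * (1 - 2 * s) := by
      ext s; simp
    have hderiv₂ : deriv (fun s ↦ c * (1 - 2 * s)) = fun _ ↦ -(2 * c) := by
      ext s; simp; ring
    have h := laplacian_comp_inner (F := fun s ↦ c * (s - s ^ 2)) (e := e) (x := x) (by fun_prop)
    rwa [he, hderiv, hderiv₂, one_pow, one_mul] at h
  have hsq_contDiff : ContDiff ℝ 2 fun z : E ↦ A * ‖z‖ ^ 2 :=
    contDiff_const.mul (contDiff_id.norm_sq ℝ)
  have hinner : ContDiff ℝ 2 fun z ↦ ⟪e, z⟫ := (innerSL ℝ e).contDiff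
  have hridge_contDiff : ContDiff ℝ 2 fun z ↦ c * (⟪e, z⟫ - ⟪e, z⟫ ^ 2) := by fun_prop
  have hadd := hsq_contDiff.contDiffAt.laplacian_add (x := x) hridge_contDiff.contDiffAt
  rwa [hsq, hridge, ← sub_eq_add_neg] at hadd

theorem le_halfBallBarrier {f : E → ℝ} (hf : ContDiff ℝ 2 f) {A c : ℝ} (hA₀ : 0 ≤ A) (hc₀ : 0 ≤ c)
    {e : E} (he : ‖e‖ = 1) (hA : ∀ x, f x ≤ A) (hfe : ∀ x, ⟪e, x⟫ = 0 → f x ≤ 0)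
    (hlap : ∀ x, 2 * finrank ℝ E * A - 2 * c < Δ f x) {x : E} (hx : ‖x‖ ≤ 1) (hex : 0 ≤ ⟪e, x⟫) :
    f x ≤ halfBallBarrier A c e x := by
  have hbarrier := contDiff_halfBallBarrier A c e
  have hinner : Continuous fun z ↦ ⟪e, z⟫ := by fun_prop
  have hK : IsCompact (closedBall 0 1 ∩ {z | 0 ≤ ⟪e, z⟫}) :=
    (isCompact_closedBall 0 1).inter_right (isClosed_le continuous_const hinner)
  refine le_of_laplacian_lt hK hf.continuous.continuousOn hbarrier.continuous.continuousOn
    (fun z hz hlt ↦ ?_) ⟨mem_closedBall_zero_iff.2 hx, hex⟩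
  have hz₁ : ‖z‖ ≤ 1 := mem_closedBall_zero_iff.1 hz.1
  have hz₀ : 0 ≤ ⟪e, z⟫ := hz.2
  have hinner_le : ⟪e, z⟫ ≤ 1 := (real_inner_le_norm e z).trans (by rwa [he, one_mul])
  have hle : A * ‖z‖ ^ 2 ≤ halfBallBarrier A c e z :=
    le_add_of_nonneg_right (mul_nonneg hc₀ (by nlinarith))
  have hz₁' : ‖z‖ < 1 := hz₁.lt_of_ne fun h ↦ by
    rw [h, one_pow, mul_one] at hle
    exact (hlt.trans_le (hA z)).not_ge hle
  have hz₀' : 0 < ⟪e, z⟫ := hz₀.lt_of_ne' fun h ↦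
    (hlt.trans_le (hfe z h)).not_ge (hle.trans' (by positivity))
  refine ⟨inter_mem (closedBall_mem_nhds_of_mem (mem_ball_zero_iff.2 hz₁')) ?_, hf.contDiffAt,
    hbarrier.contDiffAt, (laplacian_halfBallBarrier A c he z).trans_lt (hlap z)⟩
  filter_upwards [hinner.continuousAt.eventually_const_lt hz₀'] with y hy using hy.le

theorem sub_le_of_abs_laplacian_le {w : E → ℝ} (hw : ContDiff ℝ 2 w) {A C : ℝ}
    (hA : ∀ x, |w x| ≤ A) (hC : ∀ x, |Δ w x| ≤ C) {e : E} (he : ‖e‖ = 1) {t : ℝ}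
    (ht : t ∈ Icc (0 : ℝ) 1) :
    w (t • e) - w (-(t • e)) ≤
      2 * A * t ^ 2 + (2 * finrank ℝ E * A + C + 1) * (t - t ^ 2) := by
  have hA₀ : 0 ≤ A := (abs_nonneg _).trans (hA 0)
  have hC₀ : 0 ≤ C := (abs_nonneg _).trans (hC 0)
  let R : E ≃ₗᵢ[ℝ] E := (ℝ ∙ e)ᗮ.reflection
  have hRe : R (t • e) = -(t • e) := by
    rw [map_smul, Submodule.reflection_orthogonalComplement_singleton_eq_neg, smul_neg]
  have hR (z : E) (hz : ⟪e, z⟫ = 0) : R z = z :=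
    Submodule.reflection_mem_subspace_eq_self
      (Submodule.mem_orthogonal_singleton_iff_inner_right.2 hz)
  have hwR : ContDiff ℝ 2 (w ∘ R) := hw.comp R.contDiff
  have hbound := le_halfBallBarrier (f := w - w ∘ R) (hw.sub hwR) (A := 2 * A)
    (c := 2 * finrank ℝ E * A + C + 1) (by positivity) (by positivity) he
    (fun z ↦ by
      have := (abs_le.1 (hA z)).2
      have := (abs_le.1 (hA (R z))).1
      simp only [Pi.sub_apply, Function.comp_apply]
      linarith)
    (fun z hz ↦ by simp [hR z hz])
    (fun z ↦ by
      have := (abs_le.1 (hC z)).1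
      have := (abs_le.1 (hC (R z))).2
      rw [hw.contDiffAt.laplacian_sub hwR.contDiffAt, laplacian_comp_linearIsometryEquiv hw]
      linarith)
    (x := t • e) (by simpa [norm_smul, he, abs_of_nonneg ht.1] using ht.2)
    (by simpa [inner_smul_right, he] using ht.1)
  simpa [hRe, halfBallBarrier, inner_smul_right, he, norm_smul] using hbound

theorem fderiv_apply_le_of_abs_laplacian_le {u : E → ℝ} (hu : ContDiff ℝ 2 u) {A C : ℝ}
    (hA : ∀ x, |u x| ≤ A) (hC : ∀ x, |Δ u x| ≤ C) (x : E) {e : E} (he : ‖e‖ = 1) :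
    fderiv ℝ u x e ≤ (2 * finrank ℝ E * A + C + 1) / 2 := by
  set c := 2 * finrank ℝ E * A + C + 1
  have hbound (t : ℝ) (ht : t ∈ Icc (0 : ℝ) 1) :
      u (t • e + x) - u (-(t • e) + x) ≤ 2 * A * t ^ 2 + c * (t - t ^ 2) :=
    sub_le_of_abs_laplacian_le (w := fun z ↦ u (z + x)) (by fun_prop) (fun z ↦ hA _)
      (fun z ↦ by rw [laplacian_comp_add_right]; exact hC _) he ht
  have hu' : HasFDerivAt u (fderiv ℝ u x) x := (hu.differentiable two_ne_zero x).hasFDerivAt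
  have hplus : HasDerivAt (fun t : ℝ ↦ u (t • e + x)) (fderiv ℝ u x e) 0 :=
    hu'.comp_hasDerivAt_of_eq (0 : ℝ)
      (by simpa using ((hasDerivAt_id (0 : ℝ)).smul_const e).add_const x) (by simp)
  have hminus : HasDerivAt (fun t : ℝ ↦ u (-(t • e) + x)) (fderiv ℝ u x (-e)) 0 :=
    hu'.comp_hasDerivAt_of_eq (0 : ℝ)
      (by simpa using ((hasDerivAt_id (0 : ℝ)).smul_const e).neg.add_const x) (by simp)
  have hpoly : HasDerivAt (fun t : ℝ ↦ 2 * A * t ^ 2 + c * (t - t ^ 2)) c 0 := by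
    simpa using (((hasDerivAt_id (0 : ℝ)).pow 2).const_mul (2 * A)).fun_add
      (((hasDerivAt_id (0 : ℝ)).sub ((hasDerivAt_id (0 : ℝ)).pow 2)).const_mul c)
  have hgap : 0 ≤ c - (fderiv ℝ u x e - fderiv ℝ u x (-e)) := by
    refine hasDerivAt_nonneg_of_eventually_le (hpoly.sub (hplus.sub hminus)) ?_
    filter_upwards [Ioc_mem_nhdsGT one_pos] with t ht
    simpa using hbound t (Ioc_subset_Icc_self ht)
  rw [map_neg] at hgap
  linarith

theorem norm_fderiv_le_of_abs_laplacian_le {u : E → ℝ} (hu : ContDiff ℝ 2 u) {A C : ℝ}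
    (hA : ∀ x, |u x| ≤ A) (hC : ∀ x, |Δ u x| ≤ C) (x : E) :
    ‖fderiv ℝ u x‖ ≤ (2 * finrank ℝ E * A + C + 1) / 2 := by
  have hA₀ : 0 ≤ A := (abs_nonneg _).trans (hA x)
  have hC₀ : 0 ≤ C := (abs_nonneg _).trans (hC x)
  refine ContinuousLinearMap.opNorm_le_of_unit_norm (by positivity) fun e he ↦ abs_le'.2
    ⟨fderiv_apply_le_of_abs_laplacian_le hu hA hC x he, ?_⟩
  rw [← map_neg]
  exact fderiv_apply_le_of_abs_laplacian_le hu hA hC x (by rwa [norm_neg])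

theorem exists_lipschitzWith_of_abs_laplacian_le {u : E → ℝ} (hu : ContDiff ℝ 2 u) {A C : ℝ}
    (hA : ∀ x, |u x| ≤ A) (hC : ∀ x, |Δ u x| ≤ C) : ∃ L, LipschitzWith L u :=
  ⟨((2 * finrank ℝ E * A + C + 1) / 2).toNNReal,
    lipschitzWith_of_nnnorm_fderiv_le (hu.differentiable two_ne_zero) fun x ↦
      NNReal.le_toNNReal_of_coe_le (norm_fderiv_le_of_abs_laplacian_le hu hA hC x)⟩

end APrioriBounds

section Harnack

variable {E : Type*} [NormedAddCommGroup E] [InnerProductSpace ℝ E] [FiniteDimensional ℝ E]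

/-- Nonnegative `C²` functions with `Δ w ≤ C w` on the whole space: the functions to which the
strong maximum principle applies, here in the quantitative form of a weak Harnack inequality. -/
structure IsNonnegSupersolution (C : ℝ) (w : E → ℝ) : Prop where
  contDiff : ContDiff ℝ 2 w
  nonneg (x : E) : 0 ≤ w x
  laplacian_le (x : E) : Δ w x ≤ C * w x

theorem laplacian_gaussian (α η c : ℝ) (y x : E) :
    Δ (fun z ↦ η * (Real.exp (-α * ‖z - y‖ ^ 2) - c)) x =
      (4 * α ^ 2 * ‖x - y‖ ^ 2 - 2 * finrank ℝ E * α) * (η * Real.exp (-α * ‖x - y‖ ^ 2)) := by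
  have hexp (s : ℝ) : HasDerivAt (fun s ↦ Real.exp (-α * s)) (-α * Real.exp (-α * s)) s := by
    simpa [mul_comm] using ((hasDerivAt_id s).const_mul (-α)).exp
  have hderiv : deriv (fun s ↦ η * (Real.exp (-α * s) - c)) =
      fun s ↦ η * (-α * Real.exp (-α * s)) :=
    funext fun s ↦ (((hexp s).sub_const c).const_mul η).deriv
  have hderiv₂ (s : ℝ) : deriv (fun s ↦ η * (-α * Real.exp (-α * s))) s =
      η * (-α * (-α * Real.exp (-α * s))) :=
    (((hexp s).const_mul (-α)).const_mul η).deriv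
  rw [laplacian_comp_norm_sub_sq (F := fun s ↦ η * (Real.exp (-α * s) - c)) (by fun_prop), hderiv,
    hderiv₂]
  ring

theorem IsNonnegSupersolution.gaussian_le {C α ρ R η : ℝ} {w : E → ℝ} {x y : E}
    (hw : IsNonnegSupersolution C w) (hC : 0 ≤ C) (hα : 0 ≤ α) (hρ : 0 ≤ ρ)
    (hαρ : 2 * finrank ℝ E * α + C < 4 * α ^ 2 * ρ ^ 2) (hη : 0 < η)
    (hball : ∀ z ∈ ball y ρ, η ≤ w z) (hx : x ∈ closedBall y R) :
    η * (Real.exp (-α * ‖x - y‖ ^ 2) - Real.exp (-α * R ^ 2)) ≤ w x := by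
  have hcont : ContDiff ℝ 2
      fun z ↦ η * (Real.exp (-α * ‖z - y‖ ^ 2) - Real.exp (-α * R ^ 2)) :=
    contDiff_const.mul ((contDiff_const.mul
      ((contDiff_id.sub contDiff_const).norm_sq ℝ)).exp.sub contDiff_const)
  refine le_of_laplacian_lt (isCompact_closedBall y R) hcont.continuous.continuousOn
    hw.contDiff.continuous.continuousOn (fun z hz hlt ↦ ?_) hx
  have hzR : ‖z - y‖ < R := by
    refine (mem_closedBall_iff_norm.1 hz).lt_of_ne fun h ↦ (hw.nonneg z).not_gt ?_
    simpa [h] using hlt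
  have hlt' : w z < η * Real.exp (-α * ‖z - y‖ ^ 2) :=
    hlt.trans (mul_lt_mul_of_pos_left (sub_lt_self _ (Real.exp_pos _)) hη)
  have hzρ : ρ ≤ ‖z - y‖ := by
    by_contra! h
    have hexp : Real.exp (-α * ‖z - y‖ ^ 2) ≤ 1 :=
      Real.exp_le_one_iff.2 (mul_nonpos_of_nonpos_of_nonneg (neg_nonpos.2 hα) (sq_nonneg _))
    exact ((hball z (mem_ball_iff_norm.2 h)).trans_lt hlt').not_ge
      (mul_le_of_le_one_right hη.le hexp)
  refine ⟨closedBall_mem_nhds_of_mem (mem_ball_iff_norm.2 hzR), hcont.contDiffAt,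
    hw.contDiff.contDiffAt, ?_⟩
  calc Δ w z ≤ C * w z := hw.laplacian_le z
    _ ≤ C * (η * Real.exp (-α * ‖z - y‖ ^ 2)) := by gcongr
    _ < (4 * α ^ 2 * ‖z - y‖ ^ 2 - 2 * finrank ℝ E * α) *
        (η * Real.exp (-α * ‖z - y‖ ^ 2)) := by
      gcongr
      calc C < 4 * α ^ 2 * ρ ^ 2 - 2 * finrank ℝ E * α := lt_sub_iff_add_lt'.2 hαρ
        _ ≤ _ := by gcongr
    _ = _ := (laplacian_gaussian α η _ y z).symm

variable (E) in
theorem exists_harnack_const {C R ρ : ℝ} (hC : 0 ≤ C) (hR : 0 ≤ R) (hρ : 0 < ρ) :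
    ∃ δ > 0, ∀ w : E → ℝ, IsNonnegSupersolution C w → ∀ y η, (∀ z ∈ ball y ρ, η ≤ w z) →
      ∀ x ∈ closedBall y R, δ * η ≤ w x := by
  set α := 1 + (2 * finrank ℝ E + C) / (4 * ρ ^ 2) with hα_def
  have hα₁ : 1 ≤ α := le_add_of_nonneg_right (by positivity)
  have hαρ : 2 * finrank ℝ E * α + C < 4 * α ^ 2 * ρ ^ 2 := by
    have hlt : 2 * finrank ℝ E + C < 4 * ρ ^ 2 * α := by
      have heq : 4 * ρ ^ 2 * α = 4 * ρ ^ 2 + (2 * finrank ℝ E + C) := by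
        rw [hα_def]; field_simp
      linarith [sq_pos_of_pos hρ]
    calc 2 * finrank ℝ E * α + C ≤ 2 * finrank ℝ E * α + C * α :=
          add_le_add_right (le_mul_of_one_le_right hC hα₁) _
      _ = (2 * finrank ℝ E + C) * α := by ring
      _ < 4 * ρ ^ 2 * α * α := by gcongr
      _ = 4 * α ^ 2 * ρ ^ 2 := by ring
  have hexp : Real.exp (-α * (R + 1) ^ 2) < Real.exp (-α * R ^ 2) := by
    rw [Real.exp_lt_exp]
    nlinarith
  refine ⟨Real.exp (-α * R ^ 2) - Real.exp (-α * (R + 1) ^ 2), sub_pos.2 hexp,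
    fun w hw y η hball x hx ↦ ?_⟩
  rcases le_or_gt η 0 with hη | hη
  · exact (mul_nonpos_of_nonneg_of_nonpos (sub_pos.2 hexp).le hη).trans (hw.nonneg x)
  have hxR : ‖x - y‖ ≤ R := mem_closedBall_iff_norm.1 hx
  calc (Real.exp (-α * R ^ 2) - Real.exp (-α * (R + 1) ^ 2)) * η
      ≤ η * (Real.exp (-α * ‖x - y‖ ^ 2) - Real.exp (-α * (R + 1) ^ 2)) := by
        rw [mul_comm]
        gcongr η * (Real.exp ?_ - _)
        exact mul_le_mul_of_nonpos_left (by gcongr) (by linarith)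
    _ ≤ w x := hw.gaussian_le hC (by linarith) hρ.le hαρ hη hball
        (closedBall_subset_closedBall (by linarith) hx)

end Harnack

section Reaction

variable {Λ a b c d : ℝ}

/-- The nonlinearity of the system: `(P_Λ)` reads `Δ u = reaction Λ u v`, `Δ v = reaction Λ v u`. -/
def reaction (Λ a b : ℝ) : ℝ := a ^ 3 + Λ * a * b ^ 2 - a

theorem reaction_sub_le_of_near_zero_one {ε : ℝ} (hΛ : 0 ≤ Λ) (ha : 0 ≤ a) (hb : 0 ≤ b)
    (hac : a ≤ c) (hbd : b - d ≤ c - a) (hε : ε ≤ 1 / 2) (hc : c ≤ ε) (hd : 1 - ε ≤ d) :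
    reaction Λ a b - reaction Λ c d ≤ (Λ * (1 - 4 * ε) - 1) * (a - c) := by
  have : 0 ≤ c - a := sub_nonneg.2 hac
  have hd₀ : 0 ≤ d := by linarith
  have hfactor : 1 - 4 * ε ≤ d ^ 2 - a * (2 * d + ε) := by
    have hmul : a * (2 * d + ε) ≤ ε * (2 * d + ε) :=
      mul_le_mul_of_nonneg_right (hac.trans hc) (by linarith)
    have hsq : (1 - 2 * ε) ^ 2 ≤ (d - ε) ^ 2 :=
      pow_le_pow_left₀ (by linarith) (by linarith) 2
    nlinarith
  calc reaction Λ a b - reaction Λ c d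
      = Λ * a * (b + d) * (b - d) - (a ^ 2 + a * c + c ^ 2 - 1 + Λ * d ^ 2) * (c - a) := by
        unfold reaction; ring
    _ ≤ Λ * a * (2 * d + ε) * (c - a) - (0 - 1 + Λ * d ^ 2) * (c - a) := by
        have hcross : Λ * a * (b + d) * (b - d) ≤ Λ * a * (2 * d + ε) * (c - a) :=
          calc Λ * a * (b + d) * (b - d) ≤ Λ * a * (b + d) * (c - a) := by gcongr
            _ ≤ Λ * a * (2 * d + ε) * (c - a) := by
              gcongr ?_ * (c - a)
              exact mul_le_mul_of_nonneg_left (by linarith) (by positivity)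
        have : 0 ≤ c := ha.trans hac
        gcongr
        positivity
    _ = -((Λ * (d ^ 2 - a * (2 * d + ε)) - 1) * (c - a)) := by ring
    _ ≤ -((Λ * (1 - 4 * ε) - 1) * (c - a)) := by gcongr
    _ = (Λ * (1 - 4 * ε) - 1) * (a - c) := by ring

theorem reaction_sub_le_of_near_one_zero {ε : ℝ} (hΛ : 0 ≤ Λ) (ha : 0 ≤ a) (hb : 0 ≤ b)
    (hac : a ≤ c) (hbd : b - d ≤ c - a) (hbε : b ≤ ε) :
    reaction Λ a b - reaction Λ c d ≤ (a * (3 * a - 2 * Λ * ε) - 1) * (a - c) := by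
  have hcross : a * b ^ 2 - c * d ^ 2 ≤ 2 * ε * a * (c - a) := by
    have hc : 0 ≤ c := ha.trans hac
    rcases le_total b d with h | h
    · calc a * b ^ 2 - c * d ^ 2 ≤ 0 := by rw [sub_nonpos]; gcongr
        _ ≤ 2 * ε * a * (c - a) := by
          have := hb.trans hbε
          have := sub_nonneg.2 hac
          positivity
    · calc a * b ^ 2 - c * d ^ 2 ≤ a * b ^ 2 - a * d ^ 2 := by gcongr
        _ = a * ((b + d) * (b - d)) := by ring
        _ ≤ a * ((2 * ε) * (c - a)) := by
          gcongr a * ?_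
          exact mul_le_mul (by linarith) hbd (sub_nonneg.2 h) (by linarith)
        _ = 2 * ε * a * (c - a) := by ring
  have hcube : a ^ 3 - c ^ 3 ≤ 3 * a ^ 2 * (a - c) := by
    nlinarith [mul_nonneg (sub_nonneg.2 hac) (sub_nonneg.2 hac)]
  unfold reaction
  nlinarith

theorem exists_reaction_gap (hΛ : 1 < Λ) :
    ∃ ε > 0, ∃ κ > 0, ∀ a b c d : ℝ, 0 ≤ a → 0 ≤ b → a ≤ c → b - d ≤ c - a →
      dist (c, d) (0, 1) < ε ∨ dist (a, b) (1, 0) < ε →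
      reaction Λ a b - reaction Λ c d ≤ κ * (a - c) := by
  have hμ : 0 < min (Λ - 1) 1 := lt_min (sub_pos.2 hΛ) one_pos
  have hμΛ : min (Λ - 1) 1 ≤ Λ - 1 := min_le_left _ _
  have hμ₁ : min (Λ - 1) 1 ≤ 1 := min_le_right _ _
  set μ := min (Λ - 1) 1
  have hΛ₀ : 0 < Λ := one_pos.trans hΛ
  have hΛε : Λ * (μ / (8 * Λ)) = μ / 8 := by field_simp
  have hε : μ / (8 * Λ) ≤ 1 / 8 := by
    rw [div_le_div_iff₀ (by positivity) (by positivity)]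
    nlinarith
  refine ⟨μ / (8 * Λ), by positivity, μ / 2, by positivity, fun a b c d ha hb hac hbd hnear ↦ ?_⟩
  set ε := μ / (8 * Λ)
  suffices ∃ q, μ / 2 ≤ q ∧ reaction Λ a b - reaction Λ c d ≤ q * (a - c) by
    obtain ⟨q, hq, hle⟩ := this
    exact hle.trans (mul_le_mul_of_nonpos_right hq (sub_nonpos.2 hac))
  simp only [Prod.dist_eq, max_lt_iff, Real.dist_eq, sub_zero, abs_lt] at hnear
  rcases hnear with ⟨hcε, hdε⟩ | ⟨haε, hbε⟩
  · refine ⟨_, ?_, reaction_sub_le_of_near_zero_one hΛ₀.le ha hb hac hbd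
      (by linarith) hcε.2.le (by linarith)⟩
    linarith
  · refine ⟨_, ?_, reaction_sub_le_of_near_one_zero hΛ₀.le ha hb hac hbd hbε.2.le⟩
    have : 7 / 8 ≤ a := by linarith
    nlinarith

theorem reaction_sub_le (hΛ : 0 ≤ Λ) (ha : a ∈ Icc (0 : ℝ) 1) (hb : 0 ≤ b) (hc : 0 ≤ c)
    (hd : d ≤ 1) (hca : c ≤ a) (hbd : b ≤ d) :
    reaction Λ a b - reaction Λ c d ≤ (2 + Λ) * (a - c) := by
  have hd₀ : 0 ≤ d := hb.trans hbd
  have hfactor : a ^ 2 + a * c + c ^ 2 - 1 + Λ * d ^ 2 ≤ 2 + Λ := by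
    have h₁ : a ^ 2 ≤ 1 := pow_le_one₀ ha.1 ha.2
    have h₂ : a * c ≤ 1 := mul_le_one₀ ha.2 hc (hca.trans ha.2)
    have h₃ : c ^ 2 ≤ 1 := pow_le_one₀ hc (hca.trans ha.2)
    have h₄ : Λ * d ^ 2 ≤ Λ := mul_le_of_le_one_right hΛ (pow_le_one₀ hd₀ hd)
    linarith
  calc reaction Λ a b - reaction Λ c d ≤ reaction Λ a d - reaction Λ c d := by
        have := ha.1
        unfold reaction
        gcongr
    _ = (a ^ 2 + a * c + c ^ 2 - 1 + Λ * d ^ 2) * (a - c) := by unfold reaction; ring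
    _ ≤ (2 + Λ) * (a - c) := mul_le_mul_of_nonneg_right hfactor (sub_nonneg.2 hca)

theorem abs_reaction_le (hΛ : 0 ≤ Λ) (ha : a ∈ Icc (0 : ℝ) 1) (hb : b ∈ Icc (0 : ℝ) 1) :
    |reaction Λ a b| ≤ 1 + Λ := by
  obtain ⟨ha₀, ha₁⟩ := ha
  have hcube : a ^ 3 ≤ 1 := pow_le_one₀ ha₀ ha₁
  have hcoupling : Λ * a * b ^ 2 ≤ Λ * 1 * 1 := by
    gcongr
    exact pow_le_one₀ hb.1 hb.2
  have hcube₀ : 0 ≤ a ^ 3 := by positivity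
  have hcoupling₀ : 0 ≤ Λ * a * b ^ 2 := by positivity
  rw [reaction, abs_le]
  constructor <;> linarith

end Reaction

section Solutions

variable {E : Type*} [NormedAddCommGroup E] [InnerProductSpace ℝ E] [FiniteDimensional ℝ E]
  {Λ : ℝ} {u v : E → ℝ}

/-- Classical nonnegative solutions of the system `(P_Λ)` on a Euclidean space. -/
structure IsNonnegSolution (Λ : ℝ) (u v : E → ℝ) : Prop where
  contDiff_fst : ContDiff ℝ 2 u
  contDiff_snd : ContDiff ℝ 2 v
  nonneg_fst (x : E) : 0 ≤ u x
  nonneg_snd (x : E) : 0 ≤ v x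
  laplacian_fst (x : E) : Δ u x = reaction Λ (u x) (v x)
  laplacian_snd (x : E) : Δ v x = reaction Λ (v x) (u x)

namespace IsNonnegSolution

theorem swap (h : IsNonnegSolution Λ u v) : IsNonnegSolution Λ v u :=
  ⟨h.contDiff_snd, h.contDiff_fst, h.nonneg_snd, h.nonneg_fst, h.laplacian_snd, h.laplacian_fst⟩

theorem fst_mem_Icc (h : IsNonnegSolution Λ u v) (hΛ : 0 ≤ Λ) (x : E) : u x ∈ Icc (0 : ℝ) 1 := by
  refine ⟨h.nonneg_fst x, le_one_of_cube_sub_le_laplacian h.contDiff_fst (fun y ↦ ?_) x⟩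
  rw [h.laplacian_fst, reaction]
  have := mul_nonneg (mul_nonneg hΛ (h.nonneg_fst y)) (sq_nonneg (v y))
  linarith

theorem uniformContinuous_fst (h : IsNonnegSolution Λ u v) (hΛ : 0 ≤ Λ) : UniformContinuous u := by
  have hu (x : E) : |u x| ≤ 1 := by
    rw [abs_of_nonneg (h.nonneg_fst x)]
    exact (h.fst_mem_Icc hΛ x).2
  have hlap (x : E) : |Δ u x| ≤ 1 + Λ := by
    rw [h.laplacian_fst]
    exact abs_reaction_le hΛ (h.fst_mem_Icc hΛ x) (h.swap.fst_mem_Icc hΛ x)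
  obtain ⟨L, hL⟩ := exists_lipschitzWith_of_abs_laplacian_le h.contDiff_fst hu hlap
  exact hL.uniformContinuous

theorem laplacian_increment_fst (h : IsNonnegSolution Λ u v) (ξ x : E) :
    Δ (fun x ↦ u (x + ξ) - u x) x =
      reaction Λ (u (x + ξ)) (v (x + ξ)) - reaction Λ (u x) (v x) := by
  have hshift : ContDiff ℝ 2 fun x ↦ u (x + ξ) :=
    h.contDiff_fst.comp (contDiff_id.add contDiff_const)
  have hsub := hshift.contDiffAt.laplacian_sub (x := x) h.contDiff_fst.contDiffAt
  rwa [laplacian_comp_add_right, h.laplacian_fst, h.laplacian_fst] at hsub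

end IsNonnegSolution

/-- Condition `(h∞)` in coordinate-free form: `(u, v)` tends to the pure state `(1, 0)` as
`ℓ x → +∞` and to the pure state `(0, 1)` as `ℓ x → -∞`. The uniformity with respect to the other
variables is expressed by the filters `comap ℓ atTop` and `comap ℓ atBot`. -/
structure ConnectsPureStates (ℓ : E →L[ℝ] ℝ) (u v : E → ℝ) : Prop where
  tendsto_atTop : Tendsto (fun x ↦ (u x, v x)) (comap ℓ atTop) (𝓝 (1, 0))
  tendsto_atBot : Tendsto (fun x ↦ (u x, v x)) (comap ℓ atBot) (𝓝 (0, 1))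

namespace ConnectsPureStates

variable {ℓ : E →L[ℝ] ℝ}

omit [FiniteDimensional ℝ E] in
theorem swap (h : ConnectsPureStates ℓ u v) : ConnectsPureStates (-ℓ) v u := by
  have hneg : (⇑(-ℓ) : E → ℝ) = Neg.neg ∘ ℓ := rfl
  constructor
  · rw [hneg, ← comap_comap, comap_neg_atTop]
    exact (continuous_swap.tendsto _).comp h.tendsto_atBot
  · rw [hneg, ← comap_comap, comap_neg_atBot]
    exact (continuous_swap.tendsto _).comp h.tendsto_atTop

omit [FiniteDimensional ℝ E] in
theorem exists_dist_lt (h : ConnectsPureStates ℓ u v) {ε : ℝ} (hε : 0 < ε) :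
    ∃ M > 0, ∀ x, (M ≤ ℓ x → dist (u x, v x) (1, 0) < ε) ∧
      (ℓ x ≤ -M → dist (u x, v x) (0, 1) < ε) := by
  obtain ⟨s, hs, htop⟩ := mem_comap.1 (h.tendsto_atTop.eventually (ball_mem_nhds _ hε))
  obtain ⟨t, ht, hbot⟩ := mem_comap.1 (h.tendsto_atBot.eventually (ball_mem_nhds _ hε))
  obtain ⟨M, hM, hMs, hMt⟩ := ((eventually_gt_atTop 0).and ((eventually_forall_ge_atTop.2 hs).and
    (tendsto_neg_atTop_atBot.eventually (eventually_forall_le_atBot.2 ht)))).exists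
  exact ⟨M, hM, fun x ↦ ⟨fun hx ↦ htop (hMs _ hx), fun hx ↦ hbot (hMt _ hx)⟩⟩

end ConnectsPureStates

end Solutions

section MaximumPrinciple

variable {E : Type*} [NormedAddCommGroup E] [InnerProductSpace ℝ E] [FiniteDimensional ℝ E]

theorem exists_penalized_min {f : E → ℝ} (hf : Continuous f) {B : ℝ} (hB : ∀ x, B ≤ f x) (x₀ : E)
    {δ : ℝ} (hδ : 0 < δ) :
    ∃ p, f p ≤ f x₀ + δ ∧ ∃ ε ≤ δ, ∀ x, f p + ε * ‖p‖ ^ 2 ≤ f x + ε * ‖x‖ ^ 2 := by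
  set ε := δ / (1 + ‖x₀‖ ^ 2)
  have hε : 0 < ε := by positivity
  have hεx₀ : ε * (1 + ‖x₀‖ ^ 2) = δ := div_mul_cancel₀ _ (by positivity)
  have hlim : Tendsto (fun x : E ↦ f x + ε * ‖x‖ ^ 2) (cocompact E) atTop :=
    tendsto_atTop_add_left_of_le _ B hB (((tendsto_pow_atTop two_ne_zero).comp
      (tendsto_norm_cocompact_atTop (E := E))).const_mul_atTop hε)
  obtain ⟨p, hp⟩ := Continuous.exists_forall_le (by fun_prop) hlim
  have hp₀ : 0 ≤ ε * ‖p‖ ^ 2 := by positivity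
  have hx₀ : 0 ≤ ε * ‖x₀‖ ^ 2 := by positivity
  exact ⟨p, by linarith [hp x₀], ε, by linarith, hp⟩

theorem min_nonneg_of_laplacian_le {w z : E → ℝ} (hw : ContDiff ℝ 2 w) (hz : ContDiff ℝ 2 z)
    {κ B : ℝ} (hκ : 0 < κ) (hB : ∀ x, B ≤ min (w x) (z x))
    (hlapw : ∀ x, w x < 0 → w x ≤ z x → Δ w x ≤ κ * w x)
    (hlapz : ∀ x, z x < 0 → z x ≤ w x → Δ z x ≤ κ * z x) (x : E) : 0 ≤ min (w x) (z x) := by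
  by_contra! hneg
  set m := min (w x) (z x)
  set δ := κ * -m / (κ + 2 * finrank ℝ E + 1)
  have hδ : 0 < δ := div_pos (mul_pos hκ (neg_pos.2 hneg)) (by positivity)
  have hδ_eq : δ * (κ + 2 * finrank ℝ E + 1) = κ * -m := div_mul_cancel₀ _ (by positivity)
  obtain ⟨p, hpm, ε, hεδ, hmin⟩ :=
    exists_penalized_min (hw.continuous.min hz.continuous) hB x hδ
  have : 2 * finrank ℝ E * δ < -(κ * (m + δ)) := by linarith
  have hmδ : m + δ < 0 := by
    have : 0 < κ * -(m + δ) := (by positivity : 0 ≤ 2 * finrank ℝ E * δ).trans_lt (by linarith)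
    linarith [pos_of_mul_pos_right this hκ.le]
  have hcontra {g : E → ℝ} (hg : ContDiff ℝ 2 g) (hle : ∀ y, min (w y) (z y) ≤ g y)
      (hgp : g p = min (w p) (z p)) (hlap : g p < 0 → Δ g p ≤ κ * g p) : False := by
    have hgm : g p ≤ m + δ := hgp.trans_le hpm
    have hbelow : -(2 * finrank ℝ E * ε) ≤ Δ g p :=
      neg_le_laplacian_of_penalized_min hg.contDiffAt fun y ↦ by linarith [hmin y, hle y]
    have habove : Δ g p ≤ κ * (m + δ) := (hlap (hgm.trans_lt hmδ)).trans (by gcongr)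
    have hεδ' : 2 * finrank ℝ E * ε ≤ 2 * finrank ℝ E * δ := by gcongr
    linarith
  rcases le_total (w p) (z p) with h | h
  · exact hcontra hw (fun y ↦ min_le_left _ _) (min_eq_left h).symm (hlapw p · h)
  · exact hcontra hz (fun y ↦ min_le_right _ _) (min_eq_right h).symm (hlapz p · h)

end MaximumPrinciple

section Sliding

variable {E : Type*} [NormedAddCommGroup E] [InnerProductSpace ℝ E] [FiniteDimensional ℝ E]
  {Λ : ℝ} {u v : E → ℝ} {ξ : E}

/-- Translating the state `(u, v)` by `ξ` moves it up in the competitive order, in which a state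
increases when its first component increases and its second component decreases: the ordering
that the sliding method propagates from large `ξ` to small ones. -/
def Slides (u v : E → ℝ) (ξ : E) : Prop := ∀ x, u x ≤ u (x + ξ) ∧ v (x + ξ) ≤ v x

omit [InnerProductSpace ℝ E] [FiniteDimensional ℝ E] in
theorem Slides.swap (hs : Slides u v ξ) : Slides v u (-ξ) := fun x ↦ by
  simpa [and_comm] using hs (x + -ξ)

omit [InnerProductSpace ℝ E] [FiniteDimensional ℝ E] in
theorem isClosed_setOf_slides (hu : Continuous u) (hv : Continuous v) :
    IsClosed {ξ | Slides u v ξ} := by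
  simp only [Slides, ofPred_forall, ofPred_and]
  exact isClosed_iInter fun x ↦ (isClosed_le (by fun_prop) (by fun_prop)).inter
    (isClosed_le (by fun_prop) (by fun_prop))

theorem Slides.isNonnegSupersolution (hs : Slides u v ξ) (h : IsNonnegSolution Λ u v)
    (hΛ : 0 ≤ Λ) : IsNonnegSupersolution (2 + Λ) fun x ↦ u (x + ξ) - u x where
  contDiff := (h.contDiff_fst.comp (contDiff_id.add contDiff_const)).sub h.contDiff_fst
  nonneg x := sub_nonneg.2 (hs x).1
  laplacian_le x := by
    rw [h.laplacian_increment_fst]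
    exact reaction_sub_le hΛ (h.fst_mem_Icc hΛ _) (h.nonneg_snd _) (h.nonneg_fst _)
      (h.swap.fst_mem_Icc hΛ _).2 (hs x).1 (hs x).2

namespace IsNonnegSolution

theorem exists_slides_of_near (h : IsNonnegSolution Λ u v) (hΛ : 1 < Λ) :
    ∃ ε > 0, ∀ ξ, (∀ x, u (x + ξ) < u x ∨ v x < v (x + ξ) →
      dist (u x, v x) (0, 1) < ε ∨ dist (u (x + ξ), v (x + ξ)) (1, 0) < ε) → Slides u v ξ := by
  obtain ⟨ε, hε, κ, hκ, hgap⟩ := exists_reaction_gap hΛ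
  refine ⟨ε, hε, fun ξ hnear x ↦ ?_⟩
  have hΛ₀ : 0 ≤ Λ := by linarith
  have hu := h.fst_mem_Icc hΛ₀
  have hv := h.swap.fst_mem_Icc hΛ₀
  have hw : ContDiff ℝ 2 fun x ↦ u (x + ξ) - u x :=
    (h.contDiff_fst.comp (contDiff_id.add contDiff_const)).sub h.contDiff_fst
  have hz : ContDiff ℝ 2 fun x ↦ v x - v (x + ξ) :=
    h.contDiff_snd.sub (h.contDiff_snd.comp (contDiff_id.add contDiff_const))
  have hlapz (x : E) : Δ (fun x ↦ v x - v (x + ξ)) x =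
      reaction Λ (v x) (u x) - reaction Λ (v (x + ξ)) (u (x + ξ)) := by
    have hshift := laplacian_comp_add_right (fun y ↦ v (y + -ξ) - v y) ξ x
    rw [h.swap.laplacian_increment_fst] at hshift
    simpa using hshift
  have hmin := min_nonneg_of_laplacian_le hw hz hκ (B := -1)
    (fun x ↦ le_min (by linarith [(hu (x + ξ)).1, (hu x).2])
      (by linarith [(hv x).1, (hv (x + ξ)).2]))
    (fun x hneg hle ↦ by
      rw [h.laplacian_increment_fst]
      exact hgap _ _ _ _ (hu _).1 (hv _).1 (by linarith) (by linarith)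
        (hnear x (.inl (sub_neg.1 hneg))))
    (fun x hneg hle ↦ by
      rw [hlapz]
      refine hgap _ _ _ _ (hv _).1 (hu _).1 (by linarith) (by linarith) ?_
      simpa [Prod.dist_eq, and_comm, or_comm] using hnear x (.inr (sub_neg.1 hneg))) x
  exact (le_min_iff.1 hmin).imp sub_nonneg.1 sub_nonneg.1

end IsNonnegSolution

section Slab

variable {ℓ : E →L[ℝ] ℝ}

theorem exists_div_le_sub_succ (f : ℕ → ℝ) {n : ℕ} (hn : n ≠ 0) :
    ∃ k < n, (f n - f 0) / n ≤ f (k + 1) - f k := by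
  have hsum : ∑ _k ∈ Finset.range n, (f n - f 0) / n ≤
      ∑ k ∈ Finset.range n, (f (k + 1) - f k) := by
    rw [Finset.sum_range_sub, Finset.sum_const, Finset.card_range, nsmul_eq_mul,
      mul_div_cancel₀ _ (Nat.cast_ne_zero.2 hn)]
  obtain ⟨k, hk, hle⟩ := Finset.exists_le_of_sum_le (by simpa using hn) hsum
  exact ⟨k, Finset.mem_range.1 hk, hle⟩

omit [FiniteDimensional ℝ E] in
theorem ConnectsPureStates.exists_large_increment (hc : ConnectsPureStates ℓ u v)
    (hξ : 0 < ℓ ξ) (M : ℝ) :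
    ∃ R ≥ 0, ∃ η > 0, ∀ x, |ℓ x| ≤ M → ∃ y, x ∈ closedBall y R ∧ u y + 2 * η ≤ u (y + ξ) := by
  obtain ⟨M₁, hM₁, hends⟩ := hc.exists_dist_lt (ε := 1 / 4) (by norm_num)
  simp only [Prod.dist_eq, max_lt_iff, Real.dist_eq, abs_lt] at hends
  obtain ⟨J, hJ⟩ := exists_nat_gt ((|M| + M₁) / ℓ ξ)
  have hJ₀ : (0 : ℝ) < J := hJ.trans_le' (by positivity)
  rw [div_lt_iff₀ hξ] at hJ
  refine ⟨J * ‖ξ‖, by positivity, 1 / (8 * J), by positivity, fun x hx ↦ ?_⟩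
  have hxM := abs_le.1 (hx.trans (le_abs_self M))
  set f : ℕ → ℝ := fun k ↦ u (x + ((k : ℝ) - J) • ξ)
  have hbot : f 0 ≤ 1 / 4 := by
    have := ((hends (x + (((0 : ℕ) : ℝ) - J) • ξ)).2 (by
      simp only [map_add, map_smul, smul_eq_mul, Nat.cast_zero]; linarith)).1.2
    rw [sub_zero] at this
    exact this.le
  have htop : 3 / 4 ≤ f (2 * J) := by
    have := ((hends (x + (((2 * J : ℕ) : ℝ) - J) • ξ)).1 (by
      simp only [map_add, map_smul, smul_eq_mul, Nat.cast_mul, Nat.cast_ofNat]; linarith)).1.1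
    linarith
  obtain ⟨k, hk, hle⟩ := exists_div_le_sub_succ f (n := 2 * J) (by simpa using hJ₀.ne')
  refine ⟨x + ((k : ℝ) - J) • ξ, ?_, ?_⟩
  · have hkJ : (k : ℝ) < 2 * J := by exact_mod_cast hk
    have : (0 : ℝ) ≤ k := k.cast_nonneg
    rw [mem_closedBall, dist_self_add_right, norm_smul, Real.norm_eq_abs]
    gcongr
    exact abs_le.2 ⟨by linarith, by linarith⟩
  · have hstep : x + ((k : ℝ) - J) • ξ + ξ = x + (((k + 1 : ℕ) : ℝ) - J) • ξ := by
      push_cast; module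
    have hη : 2 * (1 / (8 * (J : ℝ))) = (3 / 4 - 1 / 4) / (2 * J : ℕ) := by
      push_cast; field_simp; norm_num
    rw [hstep, hη, ← le_sub_iff_add_le']
    exact hle.trans' (by gcongr)

namespace IsNonnegSolution

theorem exists_slab_gap_fst (h : IsNonnegSolution Λ u v) (hΛ : 0 ≤ Λ)
    (hc : ConnectsPureStates ℓ u v) (hξ : 0 < ℓ ξ) (hs : Slides u v ξ) (M : ℝ) :
    ∃ δ > 0, ∀ x, |ℓ x| ≤ M → u x + δ ≤ u (x + ξ) := by
  obtain ⟨R, hR, η, hη, hlarge⟩ := hc.exists_large_increment hξ M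
  obtain ⟨ρ, hρ, huc⟩ :=
    Metric.uniformContinuous_iff.1 (h.uniformContinuous_fst hΛ) (η / 2) (half_pos hη)
  obtain ⟨δ, hδ, hharnack⟩ := exists_harnack_const E (by linarith : 0 ≤ 2 + Λ) hR hρ
  refine ⟨δ * η, mul_pos hδ hη, fun x hx ↦ ?_⟩
  obtain ⟨y, hxy, hy⟩ := hlarge x hx
  refine le_sub_iff_add_le'.1
    (hharnack _ (hs.isNonnegSupersolution h hΛ) y η (fun z hz ↦ ?_) x hxy)
  have h₁ := abs_lt.1 (huc (mem_ball.1 hz))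
  have h₂ := abs_lt.1 (huc ((dist_add_right z y ξ).trans_lt hz))
  linarith

theorem exists_slab_gap (h : IsNonnegSolution Λ u v) (hΛ : 0 ≤ Λ) (hc : ConnectsPureStates ℓ u v)
    (hξ : 0 < ℓ ξ) (hs : Slides u v ξ) (M : ℝ) :
    ∃ δ > 0, ∀ x, |ℓ x| ≤ M → u x + δ ≤ u (x + ξ) ∧ v (x + ξ) + δ ≤ v x := by
  obtain ⟨δ, hδ, hu⟩ := h.exists_slab_gap_fst hΛ hc hξ hs M
  obtain ⟨δ', hδ', hv⟩ :=
    h.swap.exists_slab_gap_fst hΛ hc.swap (by simpa using hξ) hs.swap (M + |ℓ ξ|)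
  refine ⟨min δ δ', lt_min hδ hδ', fun x hx ↦ ⟨?_, ?_⟩⟩
  · exact (add_le_add_right (min_le_left _ _) _).trans (hu x hx)
  · have hxξ : |(-ℓ) (x + ξ)| ≤ M + |ℓ ξ| := by
      rw [neg_apply, abs_neg, map_add]
      exact (abs_add_le _ _).trans (add_le_add_left hx _)
    have := hv _ hxξ
    rw [add_neg_cancel_right] at this
    exact (add_le_add_right (min_le_right _ _) _).trans this

theorem eventually_slides (h : IsNonnegSolution Λ u v) (hΛ : 1 < Λ)
    (hc : ConnectsPureStates ℓ u v) (hξ : 0 < ℓ ξ) (hs : Slides u v ξ) :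
    ∀ᶠ ζ in 𝓝 ξ, Slides u v ζ := by
  have hΛ₀ : 0 ≤ Λ := by linarith
  obtain ⟨ε, hε, hnear⟩ := h.exists_slides_of_near hΛ
  obtain ⟨M, -, hends⟩ := hc.exists_dist_lt hε
  obtain ⟨δ, hδ, hgap⟩ := h.exists_slab_gap hΛ₀ hc hξ hs M
  obtain ⟨ρ, hρ, hu⟩ := Metric.uniformContinuous_iff.1 (h.uniformContinuous_fst hΛ₀) δ hδ
  obtain ⟨σ, hσ, hv⟩ := Metric.uniformContinuous_iff.1 (h.swap.uniformContinuous_fst hΛ₀) δ hδ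
  filter_upwards [ball_mem_nhds ξ hρ, ball_mem_nhds ξ hσ,
    ℓ.continuous.continuousAt.eventually_const_lt hξ] with ζ hζρ hζσ hζ
  refine hnear ζ fun x hx ↦ ?_
  rcases le_total (ℓ x) (-M) with hbot | hbot
  · exact .inl ((hends x).2 hbot)
  rcases le_total M (ℓ x) with htop | htop
  · exact .inr ((hends _).1 (by rw [map_add]; linarith))
  · have hslab := hgap x (abs_le.2 ⟨hbot, htop⟩)
    have h₁ := abs_lt.1 (hu ((dist_add_left x ζ ξ).trans_lt hζρ))
    have h₂ := abs_lt.1 (hv ((dist_add_left x ζ ξ).trans_lt hζσ))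
    rcases hx with hx | hx <;> linarith

theorem exists_slides_of_le (h : IsNonnegSolution Λ u v) (hΛ : 1 < Λ)
    (hc : ConnectsPureStates ℓ u v) : ∃ L > 0, ∀ ξ, L ≤ ℓ ξ → Slides u v ξ := by
  obtain ⟨ε, hε, hnear⟩ := h.exists_slides_of_near hΛ
  obtain ⟨M, hM, hends⟩ := hc.exists_dist_lt hε
  refine ⟨2 * M, by linarith, fun ξ hξ ↦ hnear ξ fun x _ ↦ ?_⟩
  rcases le_total (ℓ x) (-M) with hbot | hbot
  · exact .inl ((hends x).2 hbot)
  · exact .inr ((hends _).1 (by rw [map_add]; linarith))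

theorem slides_of_pos (h : IsNonnegSolution Λ u v) (hΛ : 1 < Λ)
    (hc : ConnectsPureStates ℓ u v) (hξ : 0 < ℓ ξ) : Slides u v ξ := by
  have hopen : IsOpen {ζ | 0 < ℓ ζ ∧ Slides u v ζ} := isOpen_iff_mem_nhds.2 fun ζ hζ ↦
    (ℓ.continuous.continuousAt.eventually_const_lt hζ.1).and (h.eventually_slides hΛ hc hζ.1 hζ.2)
  have hnonempty : ({ζ | 0 < ℓ ζ} ∩ {ζ | 0 < ℓ ζ ∧ Slides u v ζ}).Nonempty := by
    obtain ⟨L, hL, hslides⟩ := h.exists_slides_of_le hΛ hc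
    have hscale : ℓ ((L / ℓ ξ) • ξ) = L := by
      rw [map_smul, smul_eq_mul, div_mul_cancel₀ _ hξ.ne']
    exact ⟨_, hL.trans_eq hscale.symm, hL.trans_eq hscale.symm, hslides _ hscale.ge⟩
  have hclosed : closure {ζ | 0 < ℓ ζ ∧ Slides u v ζ} ⊆ {ζ | Slides u v ζ} :=
    closure_minimal (fun ζ hζ ↦ hζ.2)
      (isClosed_setOf_slides h.contDiff_fst.continuous h.contDiff_snd.continuous)
  have hconn : IsPreconnected {ζ | 0 < ℓ ζ} :=
    (convex_halfSpace_gt ℓ.toLinearMap.isLinear 0).isPreconnected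
  exact (hconn.subset_of_closure_inter_subset hopen hnonempty
    (fun ζ hζ ↦ ⟨hζ.2, hclosed hζ.1⟩) hξ).2

theorem slides_of_nonneg (h : IsNonnegSolution Λ u v) (hΛ : 1 < Λ)
    (hc : ConnectsPureStates ℓ u v) (hℓ : ℓ ≠ 0) (hξ : 0 ≤ ℓ ξ) : Slides u v ξ := by
  obtain ⟨ζ, hζ⟩ : ∃ ζ, 0 < ℓ ζ := by
    obtain ⟨ζ, hζ⟩ := ContinuousLinearMap.exists_ne_zero hℓ
    rcases hζ.lt_or_gt with hneg | hpos
    · exact ⟨-ζ, by simpa using hneg⟩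
    · exact ⟨ζ, hpos⟩
  have hlim : Tendsto (fun t : ℝ ↦ ξ + t • ζ) (𝓝[>] 0) (𝓝 ξ) := by
    have : Continuous fun t : ℝ ↦ ξ + t • ζ := by fun_prop
    simpa using (this.tendsto 0).mono_left nhdsWithin_le_nhds
  refine (isClosed_setOf_slides h.contDiff_fst.continuous
    h.contDiff_snd.continuous).mem_of_tendsto hlim ?_
  filter_upwards [self_mem_nhdsWithin] with t (ht : 0 < t)
  refine h.slides_of_pos hΛ hc ?_
  rw [map_add, map_smul, smul_eq_mul]
  positivity

theorem eq_of_apply_eq (h : IsNonnegSolution Λ u v) (hΛ : 1 < Λ)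
    (hc : ConnectsPureStates ℓ u v) (hℓ : ℓ ≠ 0) {x y : E} (hxy : ℓ x = ℓ y) :
    u x = u y ∧ v x = v y := by
  have hle {x y : E} (hxy : ℓ x = ℓ y) : u x ≤ u y ∧ v y ≤ v x := by
    have := h.slides_of_nonneg hΛ hc hℓ (ξ := y - x) (by simp [hxy]) x
    rwa [add_sub_cancel] at this
  exact ⟨(hle hxy).1.antisymm (hle hxy.symm).1, (hle hxy.symm).2.antisymm (hle hxy).2⟩

end IsNonnegSolution

end Slab

end Sliding

section StrictMonotonicity

variable {E : Type*} [NormedAddCommGroup E] [InnerProductSpace ℝ E]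
  {Λ : ℝ} {u v : E → ℝ} {ξ : E} {ℓ : E →L[ℝ] ℝ}

theorem ConnectsPureStates.exists_fderiv_pos (hc : ConnectsPureStates ℓ u v)
    (hu : Differentiable ℝ u) (hξ : 0 < ℓ ξ) : ∃ y, 0 < fderiv ℝ u y ξ := by
  by_contra! hnonpos
  have hderiv (t : ℝ) : HasDerivAt (fun t : ℝ ↦ u (t • ξ)) (fderiv ℝ u (t • ξ) ξ) t := by
    have hline : HasDerivAt (fun t : ℝ ↦ t • ξ) ξ t := by
      simpa using (hasDerivAt_id t).smul_const ξ
    exact (hu _).hasFDerivAt.comp_hasDerivAt t hline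
  have hanti : Antitone fun t : ℝ ↦ u (t • ξ) :=
    antitone_of_deriv_nonpos (fun t ↦ (hderiv t).differentiableAt)
      fun t ↦ (hderiv t).deriv.trans_le (hnonpos _)
  have hline : ⇑ℓ ∘ (fun t : ℝ ↦ t • ξ) = fun t ↦ t * ℓ ξ := by ext t; simp
  have htop : Tendsto (fun t : ℝ ↦ u (t • ξ)) atTop (𝓝 1) :=
    ((continuous_fst.tendsto _).comp hc.tendsto_atTop).comp
      (tendsto_comap_iff.2 (hline ▸ tendsto_id.atTop_mul_const hξ))
  have hbot : Tendsto (fun t : ℝ ↦ u (t • ξ)) atBot (𝓝 0) :=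
    ((continuous_fst.tendsto _).comp hc.tendsto_atBot).comp
      (tendsto_comap_iff.2 (hline ▸ tendsto_id.atBot_mul_const hξ))
  linarith [hanti.le_of_tendsto htop 0, hanti.ge_of_tendsto hbot 0]

theorem exists_forall_ball_mul_le_sub {u' : E →L[ℝ] ℝ} {y : E} (hu : HasStrictFDerivAt u u' y)
    {η : ℝ} (hη : η < u' ξ) :
    ∃ ρ > 0, ∀ᶠ t in 𝓝[>] (0 : ℝ), ∀ z ∈ ball y ρ, t * η ≤ u (z + t • ξ) - u z := by
  have hlim : Tendsto (fun p : ℝ × E ↦ (p.2 + p.1 • ξ, p.2)) (𝓝 0 ×ˢ 𝓝 y) (𝓝 (y, y)) := by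
    have : Continuous fun p : ℝ × E ↦ (p.2 + p.1 • ξ, p.2) := by fun_prop
    simpa [nhds_prod_eq] using this.tendsto (0, y)
  have hη₀ : 0 < u' ξ - η := sub_pos.2 hη
  have hbound := hlim.eventually
    (hu.isLittleO.def (div_pos hη₀ (by positivity : 0 < ‖ξ‖ + 1)))
  obtain ⟨P, hP, Q, hQ, hPQ⟩ := eventually_prod_iff.1 hbound
  obtain ⟨ρ, hρ, hball⟩ := Metric.eventually_nhds_iff_ball.1 hQ
  refine ⟨ρ, hρ, ?_⟩
  filter_upwards [hP.filter_mono nhdsWithin_le_nhds, self_mem_nhdsWithin] with t htP (ht : 0 < t)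
    z hz
  have herr := hPQ htP (hball z hz)
  simp only [add_sub_cancel_left, map_smul, smul_eq_mul, norm_smul, Real.norm_eq_abs,
    abs_of_pos ht] at herr
  have hsmall : (u' ξ - η) / (‖ξ‖ + 1) * (t * ‖ξ‖) ≤ t * (u' ξ - η) := by
    rw [div_mul_eq_mul_div, div_le_iff₀ (by positivity)]
    nlinarith [mul_pos hη₀ ht]
  linarith [(abs_le.1 herr).1]

theorem IsNonnegSolution.fderiv_pos [FiniteDimensional ℝ E] (h : IsNonnegSolution Λ u v)
    (hΛ : 1 < Λ) (hc : ConnectsPureStates ℓ u v) (hξ : 0 < ℓ ξ) (x : E) :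
    0 < fderiv ℝ u x ξ := by
  have hΛ₀ : 0 ≤ Λ := by linarith
  have hdiff := h.contDiff_fst.differentiable two_ne_zero
  obtain ⟨y, hy⟩ := hc.exists_fderiv_pos hdiff hξ
  obtain ⟨η, hη, hηy⟩ := exists_between hy
  obtain ⟨ρ, hρ, hball⟩ :=
    exists_forall_ball_mul_le_sub (h.contDiff_fst.contDiffAt.hasStrictFDerivAt two_ne_zero) hηy
  obtain ⟨δ, hδ, hharnack⟩ :=
    exists_harnack_const E (by linarith : 0 ≤ 2 + Λ) (dist_nonneg (x := x) (y := y)) hρ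
  have hline : HasDerivAt (fun t : ℝ ↦ x + t • ξ) ξ 0 := by
    simpa using ((hasDerivAt_id (0 : ℝ)).smul_const ξ).const_add x
  have hderiv : HasDerivAt (fun t : ℝ ↦ u (x + t • ξ) - t * (δ * η))
      (fderiv ℝ u x ξ - δ * η) 0 := by
    simpa using ((hdiff x).hasFDerivAt.comp_hasDerivAt_of_eq (0 : ℝ) hline (by simp)).fun_sub
      ((hasDerivAt_id (0 : ℝ)).mul_const (δ * η))
  refine (mul_pos hδ hη).trans_le (sub_nonneg.1 (hasDerivAt_nonneg_of_eventually_le hderiv ?_))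
  filter_upwards [hball, self_mem_nhdsWithin] with t hincr (ht : 0 < t)
  have hslides : Slides u v (t • ξ) :=
    h.slides_of_pos hΛ hc (by rw [map_smul, smul_eq_mul]; positivity)
  have hle := hharnack _ (hslides.isNonnegSupersolution h hΛ₀) y (t * η) hincr x
    (mem_closedBall.2 le_rfl)
  simp only [zero_smul, add_zero, zero_mul, sub_zero, zero_add]
  linarith

end StrictMonotonicity

theorem IsSolution.isNonnegSolution {N : ℕ} {Λ : ℝ} {u v : EuclideanSpace ℝ (Fin N) → ℝ}
    (h : IsSolution N Λ u v) (hu : ∀ x, 0 ≤ u x) (hv : ∀ x, 0 ≤ v x) :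
    IsNonnegSolution Λ u v := by
  obtain ⟨hu₂, hv₂, hlapu, hlapv⟩ := h
  refine ⟨hu₂, hv₂, hu, hv, fun x ↦ ?_, fun x ↦ ?_⟩
  · rw [← lap_eq_laplacian hu₂, reaction]
    linarith [hlapu x]
  · rw [← lap_eq_laplacian hv₂, reaction]
    linarith [hlapv x]

theorem Hinf.connectsPureStates {N : ℕ} {u v : EuclideanSpace ℝ (Fin (N + 1)) → ℝ}
    (h : Hinf N u v) :
    ConnectsPureStates (EuclideanSpace.proj (Fin.last N) : _ →L[ℝ] ℝ) u v := by
  constructor <;> refine Metric.tendsto_nhds.2 fun ε hε ↦ ?_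
  · obtain ⟨M, hM⟩ := h.1 ε hε
    filter_upwards [preimage_mem_comap (Ici_mem_atTop M)] with x hx
    simpa [Prod.dist_eq, Real.dist_eq] using hM x hx
  · obtain ⟨M, hM⟩ := h.2 ε hε
    filter_upwards [preimage_mem_comap (Iic_mem_atBot M)] with x hx
    simpa [Prod.dist_eq, Real.dist_eq] using hM x hx

theorem stmt_0_general {E : Type*} [NormedAddCommGroup E] [InnerProductSpace ℝ E]
    [FiniteDimensional ℝ E] {Λ : ℝ} (hΛ : 1 < Λ) {u v : E → ℝ} {ℓ : E →L[ℝ] ℝ} (hℓ : ℓ ≠ 0)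
    (h : IsNonnegSolution Λ u v) (hc : ConnectsPureStates ℓ u v) :
    (∀ x y, ℓ x = ℓ y → u x = u y ∧ v x = v y) ∧
      ∀ x ξ, 0 < ℓ ξ → 0 < fderiv ℝ u x ξ ∧ fderiv ℝ v x ξ < 0 := by
  refine ⟨fun x y ↦ h.eq_of_apply_eq hΛ hc hℓ, fun x ξ hξ ↦ ⟨h.fderiv_pos hΛ hc hξ x, ?_⟩⟩
  have hpos := h.swap.fderiv_pos hΛ hc.swap (ξ := -ξ) (by simpa using hξ) x
  rwa [map_neg, neg_pos] at hpos

/-- Theorem 1.1, Gibbons' conjecture for the Gross–Pitaevskii system: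
monotonicity and one-dimensional symmetry under the uniform limit condition. -/
theorem stmt_0 (N : ℕ) (Λ : ℝ) (hΛ : 1 < Λ)
    (u v : EuclideanSpace ℝ (Fin (N + 1)) → ℝ)
    (hsol : IsSolution (N + 1) Λ u v)
    (hu : ∀ x, 0 ≤ u x) (hv : ∀ x, 0 ≤ v x)
    (hinf : Hinf N u v) :
    (∀ x y : EuclideanSpace ℝ (Fin (N + 1)),
      x (Fin.last N) = y (Fin.last N) → u x = u y ∧ v x = v y) ∧
    (∀ x : EuclideanSpace ℝ (Fin (N + 1)),
      0 < fderiv ℝ u x (EuclideanSpace.single (Fin.last N) 1) ∧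
      fderiv ℝ v x (EuclideanSpace.single (Fin.last N) 1) < 0) := by
  have hℓ : (EuclideanSpace.proj (Fin.last N) : EuclideanSpace ℝ (Fin (N + 1)) →L[ℝ] ℝ) ≠ 0 :=
    fun h ↦ by simpa using DFunLike.congr_fun h (EuclideanSpace.single (Fin.last N) 1)
  obtain ⟨hsymm, hmono⟩ :=
    stmt_0_general hΛ hℓ (hsol.isNonnegSolution hu hv) hinf.connectsPureStates
  exact ⟨hsymm, fun x ↦ hmono x _ (by simp)⟩
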